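/- arXiv:2502.16042 — 2 statements merged into one kernel-verified Lean document; each statement's English description precedes it below -/
import Mathlib

section
/- (Entrywise matrix Taylor expansions of the Gaussianized covariance map.) Fix K ≥ 2 and an arm k, and let f denote f_k rescaled so that f(1) = 1 and f(0) = 0 (i.e., f = (K²/(K−1)) f_k). Let (Σ⁽ⁿ⁾) be a sequence of matrices in the correlation elliptope (the n-th of size n×n) with Δ_n = Σ⁽ⁿ⁾ − I_n (so Δ_n is symmetric with zero diagonal) and ‖Δ_n‖_op → 0. Then, with f applied entrywise: (i) f(Σ⁽ⁿ⁾) = I_n + f′(0)Δ_n + R₁ₙ with ‖R₁ₙ‖_op = O(‖Δ_n‖_op²), and ‖f(Σ⁽ⁿ⁾)‖_op = O(1); (ii) f(Σ⁽ⁿ⁾) is positive semidefinite and f(Σ⁽ⁿ⁾)^{1/2} = I_n + (1/2)f′(0)Δ_n + R₂ₙ with ‖R₂ₙ‖_op = O(‖Δ_n‖_op²); (iii) every entry of the positive semidefinite square root (Σ⁽ⁿ⁾)^{1/2} lies in [−1,1] and f((Σ⁽ⁿ⁾)^{1/2}) = I_n + (1/2)f′(0)Δ_n + R₃ₙ with ‖R₃ₙ‖_op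 = o(1) + O(‖Δ_n‖_op²). -/
open MeasureTheory ProbabilityTheory Matrix Real Filter
open scoped BigOperators ENNReal NNReal Topology

noncomputable section

/-- The spectral (operator) norm of a square real matrix. -/
def opNorm {m : ℕ} (A : Matrix (Fin m) (Fin m) ℝ) : ℝ :=
  ‖(Matrix.toEuclideanCLM (𝕜 := ℝ) A : EuclideanSpace ℝ (Fin m) →L[ℝ] EuclideanSpace ℝ (Fin m))‖

/-- The standard normal CDF `Φ`. -/
def stdGaussianCDF (x : ℝ) : ℝ := (gaussianReal 0 1 (Set.Iic x)).toReal

/-- The function `r_{i,j}(ρ)`. -/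
def rfun (q : ℕ → ℝ) (i j : ℕ) (ρ : ℝ) : ℝ :=
  ∫ r in (0 : ℝ)..ρ,
    (2 * π * Real.sqrt (1 - r ^ 2))⁻¹ *
      Real.exp (-((q i ^ 2 + q j ^ 2 - 2 * r * q i * q j) / (2 * (1 - r ^ 2))))

/-- The function `f_k` (arms `0`-indexed: `k : Fin K` represents arm `k+1`). -/
def fkfun (q : ℕ → ℝ) (K : ℕ) (k : Fin K) (ρ : ℝ) : ℝ :=
  if k.val = 0 then rfun q 1 1 ρ
  else if k.val = K - 1 then rfun q (K - 1) (K - 1) ρ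
  else rfun q k.val k.val ρ + rfun q (k.val + 1) (k.val + 1) ρ
    - 2 * rfun q k.val (k.val + 1) ρ

/-- The rescaled covariance map `f = (K²/(K−1)) f_k`, so that `f(0) = 0` and `f(1) = 1`. -/
def fresc (q : ℕ → ℝ) (K : ℕ) (k : Fin K) (ρ : ℝ) : ℝ :=
  (K : ℝ) ^ 2 / ((K : ℝ) - 1) * fkfun q K k ρ

/-- `f` applied entrywise to a square matrix. -/
def entrywise {m : ℕ} (f : ℝ → ℝ) (A : Matrix (Fin m) (Fin m) ℝ) :
    Matrix (Fin m) (Fin m) ℝ :=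
  Matrix.of fun i j => f (A i j)

lemma opNorm_nonneg {m : ℕ} (A : Matrix (Fin m) (Fin m) ℝ) : 0 ≤ opNorm A := norm_nonneg _

lemma opNorm_add_le {m : ℕ} (A B : Matrix (Fin m) (Fin m) ℝ) :
    opNorm (A + B) ≤ opNorm A + opNorm B := by
  unfold opNorm; rw [map_add]; exact norm_add_le _ _

lemma opNorm_smul {m : ℕ} (c : ℝ) (A : Matrix (Fin m) (Fin m) ℝ) :
    opNorm (c • A) = |c| * opNorm A := by
  unfold opNorm; rw [map_smul, norm_smul, Real.norm_eq_abs]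

lemma opNorm_mul_le {m : ℕ} (A B : Matrix (Fin m) (Fin m) ℝ) :
    opNorm (A * B) ≤ opNorm A * opNorm B := by
  unfold opNorm; rw [map_mul]; exact norm_mul_le _ _

lemma opNorm_one_le {m : ℕ} : opNorm (1 : Matrix (Fin m) (Fin m) ℝ) ≤ 1 := by
  unfold opNorm; rw [map_one]; exact ContinuousLinearMap.norm_id_le

lemma opNorm_apply_sq {m : ℕ} (A : Matrix (Fin m) (Fin m) ℝ) (x : EuclideanSpace ℝ (Fin m)) :
    ∑ i, (∑ j, A i j * x j) ^ 2 ≤ opNorm A ^ 2 * ∑ j, x j ^ 2 := by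
  have h := (Matrix.toEuclideanCLM (𝕜 := ℝ) A).le_opNorm x
  have h2 : ‖Matrix.toEuclideanCLM (𝕜 := ℝ) A x‖ ^ 2 ≤ (opNorm A * ‖x‖) ^ 2 :=
    pow_le_pow_left₀ (norm_nonneg _) h 2
  rw [mul_pow, EuclideanSpace.real_norm_sq_eq, EuclideanSpace.real_norm_sq_eq] at h2
  simpa [Matrix.mulVec, dotProduct] using h2

lemma col_sq_le {m : ℕ} (A : Matrix (Fin m) (Fin m) ℝ) (j : Fin m) :
    ∑ i, A i j ^ 2 ≤ opNorm A ^ 2 := by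
  have := opNorm_apply_sq A (EuclideanSpace.single j (1 : ℝ))
  simpa [Pi.single_apply] using this

lemma opNorm_le_of_sq {m : ℕ} (A : Matrix (Fin m) (Fin m) ℝ) (c : ℝ) (hc : 0 ≤ c)
    (h : ∀ x : EuclideanSpace ℝ (Fin m),
      ∑ i, (∑ j, A i j * x j) ^ 2 ≤ c ^ 2 * ∑ j, x j ^ 2) : opNorm A ≤ c := by
  refine ContinuousLinearMap.opNorm_le_bound _ hc fun x => ?_
  refine le_of_sq_le_sq ?_ (by positivity)
  rw [mul_pow, EuclideanSpace.real_norm_sq_eq, EuclideanSpace.real_norm_sq_eq]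
  simpa [Matrix.mulVec, dotProduct] using h x

lemma opNorm_le_of_abs_le {m : ℕ} (R D : Matrix (Fin m) (Fin m) ℝ) (C : ℝ) (hC : 0 ≤ C)
    (hD : D.IsSymm) (h : ∀ i j, |R i j| ≤ C * D i j ^ 2) : opNorm R ≤ C * opNorm D ^ 2 := by
  set c := C * opNorm D ^ 2 with hc
  have hcol : ∀ j, ∑ i, |R i j| ≤ c := fun j => by
    calc ∑ i, |R i j| ≤ ∑ i, C * D i j ^ 2 := Finset.sum_le_sum fun i _ => h i j
      _ = C * ∑ i, D i j ^ 2 := by rw [Finset.mul_sum]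
      _ ≤ c := mul_le_mul_of_nonneg_left (col_sq_le D j) hC
  have hrow : ∀ i, ∑ j, |R i j| ≤ c := fun i => by
    calc ∑ j, |R i j| ≤ ∑ j, C * D j i ^ 2 := Finset.sum_le_sum fun j _ => by
          rw [hD.apply]; exact h i j
      _ = C * ∑ j, D j i ^ 2 := by rw [Finset.mul_sum]
      _ ≤ c := mul_le_mul_of_nonneg_left (col_sq_le D i) hC
  have hc0 : 0 ≤ c := by positivity
  refine opNorm_le_of_sq R c hc0 fun x => ?_
  have h1 : ∀ i, (∑ j, R i j * x j) ^ 2 ≤ c * ∑ j, |R i j| * x j ^ 2 := fun i => by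
    have := Finset.sum_sq_le_sum_mul_sum_of_sq_le_mul Finset.univ
      (r := fun j => R i j * x j) (f := fun j => |R i j|) (g := fun j => |R i j| * x j ^ 2)
      (fun j _ => abs_nonneg _) (fun j _ => by positivity)
      (fun j _ => by
        have : |R i j| * (|R i j| * x j ^ 2) = |R i j| ^ 2 * x j ^ 2 := by ring
        rw [this, sq_abs]; exact le_of_eq (by ring))
    refine this.trans (mul_le_mul_of_nonneg_right (hrow i) ?_)
    exact Finset.sum_nonneg fun j _ => by positivity
  calc ∑ i, (∑ j, R i j * x j) ^ 2 ≤ ∑ i, c * ∑ j, |R i j| * x j ^ 2 :=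
        Finset.sum_le_sum fun i _ => h1 i
    _ = c * ∑ j, (∑ i, |R i j|) * x j ^ 2 := by
        rw [← Finset.mul_sum, Finset.sum_comm]; simp_rw [Finset.sum_mul]
    _ ≤ c * ∑ j, c * x j ^ 2 := by
        gcongr with j; exact hcol j
    _ = c ^ 2 * ∑ j, x j ^ 2 := by rw [← Finset.mul_sum]; ring

lemma abs_entry_le {m : ℕ} (A : Matrix (Fin m) (Fin m) ℝ) (i j : Fin m) : |A i j| ≤ opNorm A := by
  refine abs_le_of_sq_le_sq ?_ (opNorm_nonneg _)
  refine le_trans ?_ (col_sq_le A j)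
  exact Finset.single_le_sum (f := fun i => A i j ^ 2) (fun i _ => sq_nonneg _) (Finset.mem_univ i)

lemma sqrt_bound {m : ℕ} (Q F : Matrix (Fin m) (Fin m) ℝ) (hQ : Q.PosSemidef) (h : Q * Q = F) :
    opNorm (Q - 1) ≤ opNorm (F - 1) := by
  refine opNorm_le_of_sq _ _ (opNorm_nonneg _) fun x => ?_
  refine le_trans ?_ (opNorm_apply_sq (F - 1) x)
  have key : ∀ y : Fin m → ℝ, ∑ i, y i ^ 2 ≤ ∑ i, ((Q + 1) *ᵥ y) i ^ 2 := fun y => by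
    have h0 : 0 ≤ ∑ i, y i * (Q *ᵥ y) i := by
      have := hQ.dotProduct_mulVec_nonneg y
      simpa [dotProduct] using this
    have : ∀ i, ((Q + 1) *ᵥ y) i = (Q *ᵥ y) i + y i := fun i => by
      simp [Matrix.add_mulVec]
    simp_rw [this]
    have e : ∑ i, ((Q *ᵥ y) i + y i) ^ 2 =
      ∑ i, (Q *ᵥ y) i ^ 2 + 2 * ∑ i, y i * (Q *ᵥ y) i + ∑ i, y i ^ 2 := by
      rw [Finset.mul_sum, ← Finset.sum_add_distrib, ← Finset.sum_add_distrib]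
      exact Finset.sum_congr rfl fun i _ => by ring
    rw [e]
    have : 0 ≤ ∑ i, (Q *ᵥ y) i ^ 2 := Finset.sum_nonneg fun i _ => sq_nonneg _
    linarith
  have := key ((Q - 1) *ᵥ x)
  rw [Matrix.mulVec_mulVec] at this
  have e : (Q + 1) * (Q - 1) = F - 1 := by rw [← h]; noncomm_ring
  rw [e] at this
  simpa [Matrix.mulVec, dotProduct] using this

lemma sqrt_expand {m : ℕ} (Q F : Matrix (Fin m) (Fin m) ℝ) (hQ : Q.PosSemidef) (h : Q * Q = F) :
    opNorm (Q - 1 - (1 / 2 : ℝ) • (F - 1)) ≤ 1 / 2 * opNorm (F - 1) ^ 2 := by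
  have e : Q - 1 - (1 / 2 : ℝ) • (F - 1) = (-(1 / 2) : ℝ) • ((Q - 1) * (Q - 1)) := by
    have : (Q - 1) * (Q - 1) = F - 1 - (2 : ℝ) • (Q - 1) := by
      rw [← h, two_smul]; noncomm_ring
    rw [this]
    module
  rw [e, opNorm_smul, abs_neg, abs_of_pos (by norm_num)]
  have h1 := opNorm_mul_le (Q - 1) (Q - 1)
  have h2 := sqrt_bound Q F hQ h
  have h3 := opNorm_nonneg (Q - 1)
  nlinarith

lemma part_one {m : ℕ} (f : ℝ → ℝ) (c C δ : ℝ) (hC : 0 ≤ C) (f1 : f 1 = 1)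
    (hT : ∀ x, |x| ≤ δ → |f x - c * x| ≤ C * x ^ 2)
    (S : Matrix (Fin m) (Fin m) ℝ) (hS : S.PosSemidef) (hd : ∀ i, S i i = 1)
    (hδ : opNorm (S - 1) ≤ δ) :
    opNorm (entrywise f S - 1 - c • (S - 1)) ≤ C * opNorm (S - 1) ^ 2 := by
  have hsym : (S - 1).IsSymm := by
    have : S.IsSymm := by simpa [Matrix.IsHermitian, Matrix.IsSymm] using hS.isHermitian
    exact this.sub Matrix.isSymm_one
  refine opNorm_le_of_abs_le _ _ C hC hsym fun i j => ?_
  by_cases hij : i = j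
  · subst hij; simp [entrywise, hd, f1]
  · have h1 := abs_entry_le (S - 1) i j
    simp only [Matrix.sub_apply, Matrix.one_apply_ne hij, sub_zero] at h1
    simpa [entrywise, Matrix.one_apply_ne hij] using hT _ (h1.trans hδ)

lemma part_three_entries {m : ℕ} (S P : Matrix (Fin m) (Fin m) ℝ) (hP : P.PosSemidef)
    (hd : ∀ i, S i i = 1) (h : P * P = S) (i j : Fin m) : P i j ∈ Set.Icc (-1 : ℝ) 1 := by
  have hsym : P.IsSymm := by simpa [Matrix.IsHermitian, Matrix.IsSymm] using hP.isHermitian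
  rw [Set.mem_Icc, ← abs_le]
  refine abs_le_of_sq_le_sq ?_ zero_le_one
  have h1 := hd i
  rw [← h, Matrix.mul_apply] at h1
  rw [one_pow, ← h1]
  have : ∀ l, P i l * P l i = P i l ^ 2 := fun l => by rw [hsym.apply i l, sq]
  simp_rw [this]
  exact Finset.single_le_sum (f := fun l => P i l ^ 2) (fun i _ => sq_nonneg _) (Finset.mem_univ j)

lemma part_three {m : ℕ} (f : ℝ → ℝ) (c C δ ε η : ℝ) (hC : 0 ≤ C) (hε : 0 ≤ ε)
    (hT : ∀ x, |x| ≤ δ → |f x - c * x| ≤ C * x ^ 2)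
    (hη : ∀ x ≤ 1, |x - 1| ≤ η → |f x - 1 - c * (x - 1)| ≤ ε)
    (S P : Matrix (Fin m) (Fin m) ℝ) (hd : ∀ i, S i i = 1)
    (hP : P.PosSemidef) (h : P * P = S)
    (hSδ : opNorm (S - 1) ≤ δ) (hSη : opNorm (S - 1) ≤ η) :
    opNorm (entrywise f P - 1 - (c / 2) • (S - 1)) ≤
      ε + (C + |c| / 2) * opNorm (S - 1) ^ 2 := by
  have hsym : P.IsSymm := by simpa [Matrix.IsHermitian, Matrix.IsSymm] using hP.isHermitian
  have hPS := sqrt_bound P S hP h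
  set A : Matrix (Fin m) (Fin m) ℝ := Matrix.of fun i j => if i = j then 0 else f (P i j) - c * P i j
    with hA
  set B : Matrix (Fin m) (Fin m) ℝ :=
    Matrix.of fun i j => if i = j then f (P i j) - 1 - c * (P i j - 1) else 0 with hB
  have e : entrywise f P - 1 - (c / 2) • (S - 1) =
      B + (A + c • (P - 1 - (1 / 2 : ℝ) • (S - 1))) := by
    ext i j
    by_cases hij : i = j
    · subst hij; simp [hA, hB, entrywise]; ring
    · simp [hA, hB, entrywise, hij]; ring
  rw [e]
  have hA' : opNorm A ≤ C * opNorm (P - 1) ^ 2 := by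
    refine opNorm_le_of_abs_le _ _ C hC (hsym.sub Matrix.isSymm_one) fun i j => ?_
    by_cases hij : i = j
    · subst hij; simp only [hA, Matrix.of_apply, if_true, abs_zero]; positivity
    · have h1 := abs_entry_le (P - 1) i j
      simp only [Matrix.sub_apply, Matrix.one_apply_ne hij, sub_zero] at h1
      simpa [hA, hij] using hT _ ((h1.trans hPS).trans hSδ)
  have hB' : opNorm B ≤ ε * opNorm (1 : Matrix (Fin m) (Fin m) ℝ) ^ 2 := by
    refine opNorm_le_of_abs_le _ _ ε hε Matrix.isSymm_one fun i j => ?_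
    by_cases hij : i = j
    · subst hij
      have h1 := abs_entry_le (P - 1) i i
      simp only [Matrix.sub_apply, Matrix.one_apply_eq] at h1
      simpa [hB] using hη _ (part_three_entries S P hP hd h i i).2 ((h1.trans hPS).trans hSη)
    · simp [hB, hij]
  have h1 := opNorm_add_le B (A + c • (P - 1 - (1 / 2 : ℝ) • (S - 1)))
  have h2 := opNorm_add_le A (c • (P - 1 - (1 / 2 : ℝ) • (S - 1)))
  rw [opNorm_smul] at h2
  have h3 := mul_le_mul_of_nonneg_left (sqrt_expand P S hP h) (abs_nonneg c)
  have h4 : opNorm (P - 1) ^ 2 ≤ opNorm (S - 1) ^ 2 := pow_le_pow_left₀ (opNorm_nonneg _) hPS 2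
  have h5 := mul_le_mul_of_nonneg_left h4 hC
  have h6 : opNorm (1 : Matrix (Fin m) (Fin m) ℝ) ^ 2 ≤ 1 :=
    pow_le_one₀ (opNorm_nonneg _) opNorm_one_le
  have h7 := mul_le_mul_of_nonneg_left h6 hε
  linarith

lemma part_two {m : ℕ} (c C : ℝ) (S F Q : Matrix (Fin m) (Fin m) ℝ) (hC : 0 ≤ C)
    (hF : opNorm (F - 1 - c • (S - 1)) ≤ C * opNorm (S - 1) ^ 2) (h1 : opNorm (S - 1) ≤ 1)
    (hQ : Q.PosSemidef) (h : Q * Q = F) :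
    opNorm (Q - 1 - (c / 2) • (S - 1)) ≤
      (1 / 2 * C + 1 / 2 * (C + |c|) ^ 2) * opNorm (S - 1) ^ 2 := by
  have e : Q - 1 - (c / 2) • (S - 1) =
      (Q - 1 - (1 / 2 : ℝ) • (F - 1)) + (1 / 2 : ℝ) • (F - 1 - c • (S - 1)) := by
    module
  have e2 : F - 1 = (F - 1 - c • (S - 1)) + c • (S - 1) := by module
  have h2 : opNorm (F - 1) ≤ (C + |c|) * opNorm (S - 1) := by
    rw [e2]
    refine (opNorm_add_le _ _).trans ?_
    rw [opNorm_smul]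
    have := opNorm_nonneg (S - 1)
    have : C * opNorm (S - 1) ^ 2 ≤ C * opNorm (S - 1) :=
      mul_le_mul_of_nonneg_left (by nlinarith) hC
    linarith
  have h3 := pow_le_pow_left₀ (opNorm_nonneg _) h2 2
  have h4 := sqrt_expand Q F hQ h
  rw [e]
  refine (opNorm_add_le _ _).trans ?_
  rw [opNorm_smul, abs_of_pos (by norm_num)]
  rw [mul_pow] at h3
  linarith

/-- standard Gaussian -/
abbrev gam : Measure ℝ := gaussianReal 0 1

lemma charFunDual_gam (L : StrongDual ℝ ℝ) :
    charFunDual gam L = Complex.exp (-((L 1 ^ 2 : ℝ) : ℂ) / 2) := by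
  have : charFunDual gam L = charFun gam (L 1) := by
    rw [charFunDual_apply, charFun_apply_real]
    congr 1; ext x
    have : L x = x * L 1 := by
      have := L.map_smul x (1 : ℝ); simpa using this
    rw [this]; push_cast; ring_nf
  rw [this, charFun_gaussianReal]
  congr 1; push_cast; simp; ring

/-- the pair map -/
def pairCLM (ρ : ℝ) : ℝ × ℝ →L[ℝ] ℝ × ℝ :=
  (ContinuousLinearMap.fst ℝ ℝ ℝ).prod
    (ρ • ContinuousLinearMap.fst ℝ ℝ ℝ + √(1 - ρ ^ 2) • ContinuousLinearMap.snd ℝ ℝ ℝ)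

lemma pairCLM_apply (ρ : ℝ) (p : ℝ × ℝ) :
    pairCLM ρ p = (p.1, ρ * p.1 + √(1 - ρ ^ 2) * p.2) := by
  simp [pairCLM]

lemma charFunDual_pair (ρ : ℝ) (hρ : ρ ∈ Set.Icc (-1 : ℝ) 1) (L : StrongDual ℝ (ℝ × ℝ)) :
    charFunDual ((gam.prod gam).map (pairCLM ρ)) L =
      Complex.exp (-((L (1, 0) ^ 2 + 2 * ρ * L (1, 0) * L (0, 1) + L (0, 1) ^ 2 : ℝ) : ℂ) / 2) := by
  rw [charFunDual_map, charFunDual_prod, charFunDual_gam, charFunDual_gam, ← Complex.exp_add]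
  have h0 : 0 ≤ 1 - ρ ^ 2 := by nlinarith [hρ.1, hρ.2]
  have hs : √(1 - ρ ^ 2) ^ 2 = 1 - ρ ^ 2 := Real.sq_sqrt h0
  have e : ∀ x y : ℝ, L (x, y) = x * L (1, 0) + y * L (0, 1) := fun x y => by
    have : (x, y) = x • ((1 : ℝ), (0 : ℝ)) + y • ((0 : ℝ), (1 : ℝ)) := by simp
    rw [this, map_add, map_smul, map_smul]; simp
  simp only [ContinuousLinearMap.comp_apply, ContinuousLinearMap.inl_apply,
    ContinuousLinearMap.inr_apply, pairCLM_apply]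
  congr 1
  rw [e 1 (ρ * 1 + √(1 - ρ ^ 2) * 0), e 0 (ρ * 0 + √(1 - ρ ^ 2) * 1)]
  have : -(L (1, 0) ^ 2 + 2 * ρ * L (1, 0) * L (0, 1) + L (0, 1) ^ 2) / 2 =
    -(1 * L (1, 0) + (ρ * 1 + √(1 - ρ ^ 2) * 0) * L (0, 1)) ^ 2 / 2 +
    -(0 * L (1, 0) + (ρ * 0 + √(1 - ρ ^ 2) * 1) * L (0, 1)) ^ 2 / 2 := by
    have h2 : (√(1 - ρ ^ 2) * L (0, 1)) ^ 2 = (1 - ρ ^ 2) * L (0, 1) ^ 2 := by rw [mul_pow, hs]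
    ring_nf at h2 ⊢
    linarith
  exact_mod_cast (congrArg (Complex.ofReal) this).symm

lemma law_pair {n : ℕ} (p p' : EuclideanSpace ℝ (Fin n)) (hp : ‖p‖ = 1) (hp' : ‖p'‖ = 1) :
    (stdGaussian (EuclideanSpace ℝ (Fin n))).map (fun g => (inner ℝ p g, inner ℝ p' g)) =
      (gam.prod gam).map (pairCLM (inner ℝ p p')) := by
  have hρ : inner ℝ p p' ∈ Set.Icc (-1 : ℝ) 1 := by
    rw [Set.mem_Icc, ← abs_le]
    simpa [hp, hp'] using abs_real_inner_le_norm p p'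
  have : (fun g => (inner ℝ p g, inner ℝ p' g)) = ((innerSL ℝ p).prod (innerSL ℝ p')) := by
    ext g <;> simp
  rw [this]
  have : IsFiniteMeasure ((stdGaussian (EuclideanSpace ℝ (Fin n))).map
    ((innerSL ℝ p).prod (innerSL ℝ p'))) := Measure.isFiniteMeasure_map _ _
  have : IsFiniteMeasure ((gam.prod gam).map (pairCLM (inner ℝ p p'))) :=
    Measure.isFiniteMeasure_map _ _
  refine Measure.ext_of_charFunDual ?_
  ext L
  rw [charFunDual_pair _ hρ, charFunDual_map]
  have e : L.comp ((innerSL ℝ p).prod (innerSL ℝ p')) =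
      innerSL ℝ (L (1, 0) • p + L (0, 1) • p') := by
    ext g
    have : (inner ℝ p g, inner ℝ p' g) =
      inner ℝ p g • ((1 : ℝ), (0 : ℝ)) + inner ℝ p' g • ((0 : ℝ), (1 : ℝ)) := by simp
    simp only [ContinuousLinearMap.comp_apply, ContinuousLinearMap.prod_apply, innerSL_apply_apply]
    rw [this, map_add, map_smul, map_smul, inner_add_left, real_inner_smul_left,
      real_inner_smul_left]
    simp [mul_comm]
  rw [e, charFunDual_stdGaussian]
  congr 3
  rw [innerSL_apply_norm]
  have : ‖L (1, 0) • p + L (0, 1) • p'‖ ^ 2 =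
      L (1, 0) ^ 2 + 2 * inner ℝ p p' * L (1, 0) * L (0, 1) + L (0, 1) ^ 2 := by
    rw [norm_add_sq_real, norm_smul, norm_smul, hp, hp', real_inner_smul_left,
      real_inner_smul_right]
    simp; ring
  exact_mod_cast congrArg Complex.ofReal this

lemma law_snd (ρ : ℝ) (hρ : ρ ∈ Set.Icc (-1 : ℝ) 1) :
    (gam.prod gam).map (fun p => ρ * p.1 + √(1 - ρ ^ 2) * p.2) = gam := by
  have : (fun p : ℝ × ℝ => ρ * p.1 + √(1 - ρ ^ 2) * p.2) =
    (ContinuousLinearMap.snd ℝ ℝ ℝ) ∘ (pairCLM ρ) := by ext p; simp [pairCLM_apply]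
  rw [this, ← Measure.map_map (by fun_prop) (by fun_prop)]
  have : IsFiniteMeasure ((gam.prod gam).map (pairCLM ρ)) := Measure.isFiniteMeasure_map _ _
  have : IsFiniteMeasure (((gam.prod gam).map (pairCLM ρ)).map (ContinuousLinearMap.snd ℝ ℝ ℝ)) :=
    Measure.isFiniteMeasure_map _ _
  refine Measure.ext_of_charFunDual ?_
  ext L
  rw [charFunDual_map, charFunDual_pair ρ hρ, charFunDual_gam]
  simp

/-- indicator of a half line -/
def hl (a : ℝ) : ℝ → ℝ := (Set.Iic a).indicator 1

lemma hl_meas (a : ℝ) : Measurable (hl a) := measurable_one.indicator measurableSet_Iic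

lemma hl_nonneg (a x : ℝ) : 0 ≤ hl a x := Set.indicator_nonneg (by simp) _

lemma hl_le (a x : ℝ) : hl a x ≤ 1 := Set.indicator_le_self' (by simp) _

lemma hl_abs (a x : ℝ) : |hl a x| ≤ 1 := by
  rw [abs_of_nonneg (hl_nonneg _ _)]; exact hl_le _ _

lemma hl_integral (a : ℝ) : ∫ x, hl a x ∂gam = stdGaussianCDF a := by
  rw [hl, integral_indicator_one measurableSet_Iic]; rfl

/-- bivariate cdf -/
def G2 (a b ρ : ℝ) : ℝ :=
  ∫ p, hl a p.1 * hl b (ρ * p.1 + √(1 - ρ ^ 2) * p.2) ∂(gam.prod gam)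

lemma G2_meas (a b ρ : ℝ) : Measurable
    (fun p : ℝ × ℝ => hl a p.1 * hl b (ρ * p.1 + √(1 - ρ ^ 2) * p.2)) :=
  ((hl_meas a).comp measurable_fst).mul ((hl_meas b).comp (by fun_prop))

lemma hl_continuousAt (b y : ℝ) (h : y ≠ b) : ContinuousAt (hl b) y := by
  rcases lt_or_gt_of_ne h with h | h
  · have : hl b =ᶠ[𝓝 y] fun _ => 1 := by
      filter_upwards [Iio_mem_nhds h] with z hz
      simp [hl, Set.indicator, le_of_lt (Set.mem_Iio.1 hz)]
    exact this.continuousAt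
  · have : hl b =ᶠ[𝓝 y] fun _ => 0 := by
      filter_upwards [Ioi_mem_nhds h] with z hz
      simp only [hl, Set.indicator]
      rw [if_neg]; simpa using hz
    exact this.continuousAt

lemma G2_cont (a b ρ : ℝ) (hρ : ρ ∈ Set.Icc (-1 : ℝ) 1) : ContinuousAt (G2 a b) ρ := by
  unfold G2
  refine continuousAt_of_dominated (bound := fun _ => 1) ?_ ?_ (integrable_const _) ?_
  · exact Eventually.of_forall fun r => (G2_meas a b r).aestronglyMeasurable
  · refine Eventually.of_forall fun r => Eventually.of_forall fun p => ?_
    rw [norm_mul, Real.norm_eq_abs, Real.norm_eq_abs]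
    exact mul_le_one₀ (hl_abs _ _) (abs_nonneg _) (hl_abs _ _)
  · have h0 : ∀ᵐ y ∂((gam.prod gam).map (fun p => ρ * p.1 + √(1 - ρ ^ 2) * p.2)), y ≠ b := by
      rw [law_snd ρ hρ]
      have := nullSingletonClass_gaussianReal (μ := 0) (v := 1) one_ne_zero
      exact Measure.ae_ne gam b
    have h1 := ae_of_ae_map (by fun_prop) h0
    filter_upwards [h1] with p hp
    refine continuousAt_const.mul ?_
    exact ContinuousAt.comp (f := fun r : ℝ => r * p.1 + √(1 - r ^ 2) * p.2)
      (hl_continuousAt b _ hp) (by fun_prop)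

lemma G2_zero (a b : ℝ) : G2 a b 0 = stdGaussianCDF a * stdGaussianCDF b := by
  unfold G2
  simp only [zero_mul, zero_add]
  rw [show √(1 - (0 : ℝ) ^ 2) = 1 by simp]
  simp only [one_mul]
  rw [integral_prod_mul (hl a) (hl b), hl_integral, hl_integral]

lemma G2_one (a b : ℝ) : G2 a b 1 = min (stdGaussianCDF a) (stdGaussianCDF b) := by
  unfold G2
  simp only [one_pow, sub_self, Real.sqrt_zero, zero_mul, one_mul, add_zero]
  rw [integral_fun_fst (fun x => hl a x * hl b x)]
  have e : (fun x => hl a x * hl b x) = hl (min a b) := by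
    ext x; simp only [hl, Set.indicator, Set.mem_Iic, le_min_iff]
    by_cases h1 : x ≤ a <;> by_cases h2 : x ≤ b <;> simp [h1, h2]
  have hm : Monotone stdGaussianCDF := fun x y h =>
    measureReal_mono (μ := gam) (Set.Iic_subset_Iic.2 h)
  rw [e, hl_integral, hm.map_min]
  simp

/-- standard normal density -/
def phi (x : ℝ) : ℝ := (√(2 * π))⁻¹ * Real.exp (-x ^ 2 / 2)

lemma phi_eq : gaussianPDFReal 0 1 = phi := by
  ext x; simp [gaussianPDFReal, phi]

lemma phi_nonneg (x : ℝ) : 0 ≤ phi x := by unfold phi; positivity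

lemma phi_le_one (x : ℝ) : phi x ≤ 1 := by
  unfold phi
  refine mul_le_one₀ ?_ (by positivity) ?_
  · refine inv_le_one_of_one_le₀ ?_
    rw [Real.one_le_sqrt]
    linarith [Real.pi_gt_three]
  · rw [Real.exp_le_one_iff]; nlinarith [sq_nonneg x]

lemma phi_cont : Continuous phi := by unfold phi; fun_prop

lemma phi_hasDerivAt (x : ℝ) : HasDerivAt phi (-x * phi x) x := by
  have h : HasDerivAt (fun x : ℝ => -x ^ 2 / 2) (-x) x := by
    have := ((hasDerivAt_id x).pow 2).neg.div_const 2
    convert! this using 1; simp; ring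
  have := h.exp.const_mul (√(2 * π))⁻¹
  unfold phi
  convert! this using 1; ring

lemma cdf_eq (x : ℝ) : stdGaussianCDF x = ∫ y in Set.Iic x, phi y := by
  unfold stdGaussianCDF
  rw [gaussianReal_apply_eq_integral 0 one_ne_zero, phi_eq, ENNReal.toReal_ofReal]
  exact integral_nonneg phi_nonneg

lemma phi_int : Integrable phi := phi_eq ▸ integrable_gaussianPDFReal 0 1

lemma cdf_hasDerivAt (x : ℝ) : HasDerivAt stdGaussianCDF (phi x) x := by
  have e : stdGaussianCDF = fun x => (∫ y in (0 : ℝ)..x, phi y) + stdGaussianCDF 0 := by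
    ext x
    rw [cdf_eq, cdf_eq, ← intervalIntegral.integral_Iic_sub_Iic phi_int.integrableOn
      phi_int.integrableOn]
    ring
  rw [e]
  refine HasDerivAt.add_const _ ?_
  exact intervalIntegral.integral_hasDerivAt_right (phi_cont.intervalIntegrable _ _)
    (phi_cont.stronglyMeasurableAtFilter _ _) phi_cont.continuousAt

/-- bivariate density -/
def dens (a b r : ℝ) : ℝ :=
  (2 * π * Real.sqrt (1 - r ^ 2))⁻¹ *
      Real.exp (-((a ^ 2 + b ^ 2 - 2 * r * a * b) / (2 * (1 - r ^ 2))))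

lemma dens_nonneg (a b r : ℝ) : 0 ≤ dens a b r := by unfold dens; positivity

lemma dens_eq (a b r : ℝ) (hr : 0 < 1 - r ^ 2) :
    (√(1 - r ^ 2))⁻¹ * (phi a * phi ((b - r * a) / √(1 - r ^ 2))) = dens a b r := by
  unfold phi dens
  have h1 : √(2 * π) * √(2 * π) = 2 * π := Real.mul_self_sqrt (by positivity)
  have e : Real.exp (-((a ^ 2 + b ^ 2 - 2 * r * a * b) / (2 * (1 - r ^ 2)))) =
      Real.exp (-a ^ 2 / 2) * Real.exp (-((b - r * a) / √(1 - r ^ 2)) ^ 2 / 2) := by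
    rw [← Real.exp_add, div_pow, Real.sq_sqrt hr.le]
    congr 1; field_simp; ring
  have h2 : (√(2 * π))⁻¹ * (√(2 * π))⁻¹ = (2 * π)⁻¹ := by rw [← mul_inv, h1]
  rw [e, mul_inv, ← h2]
  ring

lemma G2_eq (a b ρ : ℝ) (hρ : 0 < 1 - ρ ^ 2) :
    G2 a b ρ = ∫ x, hl a x * stdGaussianCDF ((b - ρ * x) / √(1 - ρ ^ 2)) ∂gam := by
  unfold G2
  have hs : 0 < √(1 - ρ ^ 2) := Real.sqrt_pos.2 hρ
  rw [integral_prod]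
  · congr 1; ext x
    simp only
    rw [integral_const_mul, ← hl_integral]
    congr 2; ext z
    simp only [hl, Set.indicator, Set.mem_Iic]
    congr 1
    rw [le_div_iff₀ hs, eq_iff_iff]
    constructor <;> intro h <;> linarith
  · refine Integrable.of_bound (G2_meas a b ρ).aestronglyMeasurable 1 ?_
    refine Eventually.of_forall fun p => ?_
    rw [norm_mul, Real.norm_eq_abs, Real.norm_eq_abs]
    exact mul_le_one₀ (hl_abs _ _) (abs_nonneg _) (hl_abs _ _)

lemma arg_hasDerivAt (b x r : ℝ) (hr : 0 < 1 - r ^ 2) :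
    HasDerivAt (fun r : ℝ => (b - r * x) / √(1 - r ^ 2)) ((b * r - x) / √(1 - r ^ 2) ^ 3) r := by
  have hs : 0 < √(1 - r ^ 2) := Real.sqrt_pos.2 hr
  have h1 : HasDerivAt (fun r : ℝ => 1 - r ^ 2) (-(2 * r)) r := by
    have := ((hasDerivAt_id r).pow 2).const_sub 1
    convert! this using 1; simp
  have h2 := h1.sqrt hr.ne'
  have h3 : HasDerivAt (fun r : ℝ => b - r * x) (-x) r := by
    have := ((hasDerivAt_id r).mul_const x).const_sub b
    convert! this using 1; simp
  have := h3.div h2 hs.ne'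
  convert! this using 1
  have hq : √(1 - r ^ 2) ^ 2 = 1 - r ^ 2 := Real.sq_sqrt hr.le
  field_simp
  rw [hq]; ring

lemma G2_hasDerivAt (a b ρ : ℝ) (hρ : ρ ∈ Set.Ioo (-1 : ℝ) 1) :
    HasDerivAt (G2 a b) (dens a b ρ) ρ := by
  have habs : |ρ| < 1 := abs_lt.2 hρ
  obtain ⟨r', hr1, hr2⟩ := exists_between habs
  have hr0 : 0 < r' := (abs_nonneg ρ).trans_lt hr1
  have hm : 0 < 1 - r' ^ 2 := by nlinarith
  set s := Set.Ioo (-r') r' with hs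
  have hle : ∀ r ∈ s, 1 - r' ^ 2 ≤ 1 - r ^ 2 := fun r hr => by nlinarith [hr.1, hr.2]
  have hpos : ∀ r ∈ s, 0 < 1 - r ^ 2 := fun r hr => hm.trans_le (hle r hr)
  have hρs : ρ ∈ s := abs_lt.1 hr1
  have hsn : s ∈ 𝓝 ρ := Ioo_mem_nhds hρs.1 hρs.2
  have hcm : Measurable stdGaussianCDF :=
    (continuous_iff_continuousAt.2 fun x => (cdf_hasDerivAt x).continuousAt).measurable
  set F' : ℝ → ℝ → ℝ := fun r x =>
    hl a x * (phi ((b - r * x) / √(1 - r ^ 2)) * ((b * r - x) / √(1 - r ^ 2) ^ 3)) with hF'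
  have key := hasDerivAt_integral_of_dominated_loc_of_deriv_le (μ := gam)
    (F := fun r x => hl a x * stdGaussianCDF ((b - r * x) / √(1 - r ^ 2)))
    (F' := F')
    (bound := fun x => (|b| + |x|) / √(1 - r' ^ 2) ^ 3) hsn
    (Eventually.of_forall fun r =>
      ((hl_meas a).mul (hcm.comp (by fun_prop))).aestronglyMeasurable)
    (Integrable.of_bound ((hl_meas a).mul (hcm.comp (by fun_prop))).aestronglyMeasurable 1
      (Eventually.of_forall fun x => by
        rw [norm_mul, Real.norm_eq_abs, Real.norm_eq_abs]
        refine mul_le_one₀ (hl_abs _ _) (abs_nonneg _) ?_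
        unfold stdGaussianCDF
        rw [abs_of_nonneg ENNReal.toReal_nonneg]
        exact measureReal_le_one (μ := gam)))
    (((hl_meas a).mul ((phi_cont.measurable.comp (by fun_prop)).mul
      (by fun_prop))).aestronglyMeasurable)
    (Eventually.of_forall fun x r hr => by
      simp only [hF']
      rw [norm_mul, norm_mul, Real.norm_eq_abs, Real.norm_eq_abs, norm_div, Real.norm_eq_abs,
        Real.norm_eq_abs, abs_of_nonneg (phi_nonneg _)]
      have h1 : |b * r - x| ≤ |b| + |x| := by
        refine (abs_sub _ _).trans ?_
        rw [abs_mul]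
        have : |r| ≤ 1 := (abs_lt.2 hr).le.trans hr2.le
        nlinarith [abs_nonneg b]
      have h2 : √(1 - r' ^ 2) ^ 3 ≤ |√(1 - r ^ 2) ^ 3| := by
        rw [abs_of_nonneg (by positivity)]
        exact pow_le_pow_left₀ (Real.sqrt_nonneg _) (Real.sqrt_le_sqrt (hle r hr)) 3
      have h3 : |b * r - x| / |√(1 - r ^ 2) ^ 3| ≤ (|b| + |x|) / √(1 - r' ^ 2) ^ 3 := by
        have : 0 < √(1 - r' ^ 2) := Real.sqrt_pos.2 hm
        gcongr
      have h0 : 0 ≤ |b * r - x| / |√(1 - r ^ 2) ^ 3| := by positivity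
      refine le_trans ?_ h3
      calc _ ≤ 1 * (1 * (|b * r - x| / |√(1 - r ^ 2) ^ 3|)) := by
            gcongr
            · exact mul_nonneg (phi_nonneg _) h0
            · exact hl_abs _ _
            · exact phi_le_one _
        _ = _ := by ring)
    (by
      have : Integrable (fun x : ℝ => x) gam :=
        memLp_one_iff_integrable.1 (memLp_id_gaussianReal 1)
      exact ((integrable_const _).add this.abs).div_const _)
    (Eventually.of_forall fun x r hr => by
      have := (cdf_hasDerivAt ((b - r * x) / √(1 - r ^ 2))).comp r (arg_hasDerivAt b x r (hpos r hr))
      exact this.const_mul _)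
  have hρ2 := hpos ρ hρs
  have hval : ∫ x, F' ρ x ∂gam = dens a b ρ := by
    rw [integral_gaussianReal_eq_integral_smul one_ne_zero, phi_eq]
    set H' : ℝ → ℝ := fun x => (√(1 - ρ ^ 2))⁻¹ *
      ((-x * phi x) * phi ((b - ρ * x) / √(1 - ρ ^ 2)) +
        phi x * ((-((b - ρ * x) / √(1 - ρ ^ 2)) * phi ((b - ρ * x) / √(1 - ρ ^ 2))) *
          (-ρ / √(1 - ρ ^ 2)))) with hH'
    have hspos : 0 < √(1 - ρ ^ 2) := Real.sqrt_pos.2 hρ2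
    have hq : √(1 - ρ ^ 2) ^ 2 = 1 - ρ ^ 2 := Real.sq_sqrt hρ2.le
    have e : (fun x => phi x • F' ρ x) = (Set.Iic a).indicator H' := by
      ext x
      by_cases hx : x ≤ a
      · rw [Set.indicator_of_mem (Set.mem_Iic.2 hx)]
        simp only [hF', hH', hl, Set.indicator_of_mem (Set.mem_Iic.2 hx), Pi.one_apply, one_mul,
          smul_eq_mul]
        generalize phi ((b - ρ * x) / √(1 - ρ ^ 2)) = u
        field_simp
        rw [hq]; ring
      · simp [hF', hl, hx]
    have hint : IntegrableOn H' (Set.Iic a) := by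
      rw [← integrable_indicator_iff measurableSet_Iic, ← e]
      have h1 := key.1
      rw [gam, gaussianReal_of_var_ne_zero 0 one_ne_zero,
        integrable_withDensity_iff_integrable_smul' (by fun_prop)
        (Eventually.of_forall fun x => gaussianPDF_lt_top)] at h1
      simpa only [toReal_gaussianPDF, phi_eq] using h1
    rw [e, integral_indicator measurableSet_Iic]
    have := integral_Iic_of_hasDerivAt_of_tendsto' (a := a) (m := 0)
      (f := fun x => (√(1 - ρ ^ 2))⁻¹ * (phi x * phi ((b - ρ * x) / √(1 - ρ ^ 2)))) (f' := H')
      (fun x _ => by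
        have h3 : HasDerivAt (fun x : ℝ => (b - ρ * x) / √(1 - ρ ^ 2)) (-ρ / √(1 - ρ ^ 2)) x := by
          have := (((hasDerivAt_id x).const_mul ρ).const_sub b).div_const (√(1 - ρ ^ 2))
          convert! this using 1; simp
        have h4 := (phi_hasDerivAt ((b - ρ * x) / √(1 - ρ ^ 2))).comp x h3
        exact ((phi_hasDerivAt x).mul h4).const_mul _) hint
      (by
        have hphi : Tendsto phi atBot (𝓝 0) := by
          unfold phi
          have h1 : Tendsto (fun x : ℝ => -x ^ 2 / 2) atBot atBot := by
            have : Tendsto (fun x : ℝ => x ^ 2) atBot atTop :=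
              by simpa [sq] using! tendsto_id.atBot_mul_atBot₀ (tendsto_id (α := ℝ) (x := atBot))
            exact (tendsto_neg_atTop_atBot.comp this).atBot_div_const two_pos
          have := (Real.tendsto_exp_atBot.comp h1).const_mul (√(2 * π))⁻¹
          simpa using! this
        have h2 : Tendsto (fun x => phi x * phi ((b - ρ * x) / √(1 - ρ ^ 2))) atBot (𝓝 0) := by
          refine squeeze_zero (fun x => mul_nonneg (phi_nonneg _) (phi_nonneg _)) (fun x => ?_) hphi
          exact mul_le_of_le_one_right (phi_nonneg _) (phi_le_one _)
        simpa using h2.const_mul (√(1 - ρ ^ 2))⁻¹)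
    rw [this, sub_zero, dens_eq a b ρ hρ2]
  rw [← hval]
  refine key.2.congr_of_eventuallyEq ?_
  filter_upwards [hsn] with r hr using G2_eq a b r (hpos r hr)

lemma rfun_eq (q : ℕ → ℝ) (i j : ℕ) (ρ : ℝ) (hρ : ρ ∈ Set.Icc (-1 : ℝ) 1) :
    rfun q i j ρ = G2 (q i) (q j) ρ - stdGaussianCDF (q i) * stdGaussianCDF (q j) := by
  have hsub : Set.uIcc 0 ρ ⊆ Set.Icc (-1 : ℝ) 1 :=
    Set.uIcc_subset_Icc (by constructor <;> norm_num) hρ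
  have hc : ContinuousOn (G2 (q i) (q j)) (Set.uIcc 0 ρ) := fun x hx =>
    (G2_cont _ _ x (hsub hx)).continuousWithinAt
  have hd : ∀ x ∈ Set.Ioo (min 0 ρ) (max 0 ρ),
      HasDerivAt (G2 (q i) (q j)) (dens (q i) (q j) x) x := fun x hx => by
    refine G2_hasDerivAt _ _ x ⟨lt_of_le_of_lt ?_ hx.1, lt_of_lt_of_le hx.2 ?_⟩
    · exact le_min (by norm_num) hρ.1
    · exact max_le (by norm_num) hρ.2
  have := intervalIntegral.integral_eq_sub_of_hasDeriv_right hc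
    (fun x hx => (hd x hx).hasDerivWithinAt)
    (intervalIntegral.intervalIntegrable_deriv_of_nonneg hc hd fun x _ => dens_nonneg _ _ _)
  rw [← G2_zero, ← this]
  rfl

lemma rfun_hasDerivAt (q : ℕ → ℝ) (i j : ℕ) (ρ : ℝ) (hρ : ρ ∈ Set.Ioo (-1 : ℝ) 1) :
    HasDerivAt (rfun q i j) (dens (q i) (q j) ρ) ρ := by
  refine ((G2_hasDerivAt (q i) (q j) ρ hρ).sub_const
    (stdGaussianCDF (q i) * stdGaussianCDF (q j))).congr_of_eventuallyEq ?_
  filter_upwards [Ioo_mem_nhds hρ.1 hρ.2] with r hr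
  exact rfun_eq q i j r ⟨hr.1.le, hr.2.le⟩

lemma dens_diff (a b : ℝ) : DifferentiableAt ℝ (dens a b) 0 := by
  unfold dens
  have h : (1 - (0 : ℝ) ^ 2) ≠ 0 := by norm_num
  have h1 : DifferentiableAt ℝ (fun r : ℝ => √(1 - r ^ 2)) 0 :=
    DifferentiableAt.sqrt (by fun_prop) h
  have h2 : DifferentiableAt ℝ (fun r : ℝ => (2 * π * √(1 - r ^ 2))⁻¹) 0 :=
    DifferentiableAt.inv (h1.const_mul _) (by simp [Real.pi_ne_zero])
  refine h2.mul (DifferentiableAt.exp (DifferentiableAt.neg ?_))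
  exact DifferentiableAt.div (by fun_prop) (by fun_prop) (by norm_num)

lemma rfun_symm (q : ℕ → ℝ) (i j : ℕ) (ρ : ℝ) : rfun q i j ρ = rfun q j i ρ := by
  unfold rfun
  congr 1; ext r
  rw [show q i ^ 2 + q j ^ 2 - 2 * r * q i * q j = q j ^ 2 + q i ^ 2 - 2 * r * q j * q i by ring]

/-- centered indicator -/
def ch (a : ℝ) (x : ℝ) : ℝ := hl a x - stdGaussianCDF a

lemma ch_meas (a : ℝ) : Measurable (ch a) := (hl_meas a).sub_const _

lemma cdf_abs (a : ℝ) : |stdGaussianCDF a| ≤ 1 := by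
  unfold stdGaussianCDF
  rw [abs_of_nonneg ENNReal.toReal_nonneg]
  exact measureReal_le_one (μ := gam)

lemma ch_abs (a x : ℝ) : |ch a x| ≤ 2 := by
  unfold ch
  refine (abs_sub _ _).trans ?_
  linarith [hl_abs a x, cdf_abs a]

lemma rfun_cov (q : ℕ → ℝ) (i j : ℕ) (ρ : ℝ) (hρ : ρ ∈ Set.Icc (-1 : ℝ) 1) :
    rfun q i j ρ =
      ∫ p, ch (q i) p.1 * ch (q j) (ρ * p.1 + √(1 - ρ ^ 2) * p.2) ∂(gam.prod gam) := by
  rw [rfun_eq q i j ρ hρ]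
  set a := q i
  set b := q j
  set Y : ℝ × ℝ → ℝ := fun p => ρ * p.1 + √(1 - ρ ^ 2) * p.2 with hY
  have hYm : Measurable Y := by fun_prop
  have e : (fun p : ℝ × ℝ => ch a p.1 * ch b (Y p)) = fun p =>
      hl a p.1 * hl b (Y p) - stdGaussianCDF b * hl a p.1 - stdGaussianCDF a * hl b (Y p)
        + stdGaussianCDF a * stdGaussianCDF b := by
    ext p; unfold ch; ring
  have i1 : Integrable (fun p : ℝ × ℝ => hl a p.1) (gam.prod gam) :=
    Integrable.of_bound ((hl_meas a).comp measurable_fst).aestronglyMeasurable 1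
      (Eventually.of_forall fun p => hl_abs _ _)
  have i2 : Integrable (fun p : ℝ × ℝ => hl b (Y p)) (gam.prod gam) :=
    Integrable.of_bound ((hl_meas b).comp hYm).aestronglyMeasurable 1
      (Eventually.of_forall fun p => hl_abs _ _)
  have i3 : Integrable (fun p : ℝ × ℝ => hl a p.1 * hl b (Y p)) (gam.prod gam) :=
    Integrable.of_bound (G2_meas a b ρ).aestronglyMeasurable 1
      (Eventually.of_forall fun p => by
        rw [norm_mul, Real.norm_eq_abs, Real.norm_eq_abs]
        exact mul_le_one₀ (hl_abs _ _) (abs_nonneg _) (hl_abs _ _))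
  have v1 : ∫ p : ℝ × ℝ, hl a p.1 ∂(gam.prod gam) = stdGaussianCDF a := by
    rw [integral_fun_fst (hl a), hl_integral]; simp
  have v2 : ∫ p : ℝ × ℝ, hl b (Y p) ∂(gam.prod gam) = stdGaussianCDF b := by
    rw [← integral_map (φ := Y) hYm.aemeasurable (hl_meas b).aestronglyMeasurable,
      law_snd ρ hρ, hl_integral]
  change _ = ∫ p, ch a p.1 * ch b (Y p) ∂(gam.prod gam)
  have i4 : Integrable (fun p : ℝ × ℝ => hl a p.1 * hl b (Y p) - stdGaussianCDF b * hl a p.1)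
    (gam.prod gam) := i3.sub (i1.const_mul _)
  have i5 : Integrable (fun p : ℝ × ℝ => hl a p.1 * hl b (Y p) - stdGaussianCDF b * hl a p.1 -
    stdGaussianCDF a * hl b (Y p)) (gam.prod gam) := i4.sub (i2.const_mul _)
  rw [e, integral_add i5 (integrable_const _),
    integral_sub i4 (i2.const_mul _), integral_sub i3 (i1.const_mul _),
    integral_const_mul, integral_const_mul, v1, v2]
  simp only [G2, hY, integral_const, probReal_univ, one_smul]
  ring

/-- Covariance representation, continuity, Taylor, and value at one -/
lemma fkfun_repr (q : ℕ → ℝ) (K : ℕ) (k : Fin K) : ∃ (h : ℝ → ℝ) (B : ℝ), Measurable h ∧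
    (∀ x, |h x| ≤ B) ∧ ∀ ρ ∈ Set.Icc (-1 : ℝ) 1, fkfun q K k ρ =
      ∫ p, h p.1 * h (ρ * p.1 + √(1 - ρ ^ 2) * p.2) ∂(gam.prod gam) := by
  unfold fkfun
  split_ifs with h1 h2
  · exact ⟨ch (q 1), 2, ch_meas _, ch_abs _, fun ρ hρ => rfun_cov q 1 1 ρ hρ⟩
  · exact ⟨ch (q (K - 1)), 2, ch_meas _, ch_abs _, fun ρ hρ => rfun_cov q _ _ ρ hρ⟩
  · set i := k.val
    set j := k.val + 1
    refine ⟨fun x => ch (q j) x - ch (q i) x, 4, (ch_meas _).sub (ch_meas _), fun x => ?_,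
      fun ρ hρ => ?_⟩
    · refine (abs_sub _ _).trans ?_
      linarith [ch_abs (q j) x, ch_abs (q i) x]
    · have hi : ∀ a b : ℝ, Integrable (fun p : ℝ × ℝ =>
          ch a p.1 * ch b (ρ * p.1 + √(1 - ρ ^ 2) * p.2)) (gam.prod gam) := fun a b => by
        refine Integrable.of_bound (((ch_meas a).comp measurable_fst).mul
          ((ch_meas b).comp (by fun_prop))).aestronglyMeasurable 4
          (Eventually.of_forall fun p => ?_)
        rw [norm_mul, Real.norm_eq_abs, Real.norm_eq_abs]
        have := mul_le_mul (ch_abs a p.1) (ch_abs b (ρ * p.1 + √(1 - ρ ^ 2) * p.2))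
          (abs_nonneg _) (by norm_num)
        linarith
      have e : (fun p : ℝ × ℝ => (ch (q j) p.1 - ch (q i) p.1) *
          (ch (q j) (ρ * p.1 + √(1 - ρ ^ 2) * p.2) - ch (q i) (ρ * p.1 + √(1 - ρ ^ 2) * p.2))) =
          fun p => ch (q i) p.1 * ch (q i) (ρ * p.1 + √(1 - ρ ^ 2) * p.2) +
            ch (q j) p.1 * ch (q j) (ρ * p.1 + √(1 - ρ ^ 2) * p.2) -
            ch (q i) p.1 * ch (q j) (ρ * p.1 + √(1 - ρ ^ 2) * p.2) -
            ch (q j) p.1 * ch (q i) (ρ * p.1 + √(1 - ρ ^ 2) * p.2) := by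
        ext p; ring
      have i4 : Integrable (fun p : ℝ × ℝ =>
          ch (q i) p.1 * ch (q i) (ρ * p.1 + √(1 - ρ ^ 2) * p.2) +
          ch (q j) p.1 * ch (q j) (ρ * p.1 + √(1 - ρ ^ 2) * p.2)) (gam.prod gam) :=
        (hi _ _).add (hi _ _)
      have i5 : Integrable (fun p : ℝ × ℝ =>
          ch (q i) p.1 * ch (q i) (ρ * p.1 + √(1 - ρ ^ 2) * p.2) +
          ch (q j) p.1 * ch (q j) (ρ * p.1 + √(1 - ρ ^ 2) * p.2) -
          ch (q i) p.1 * ch (q j) (ρ * p.1 + √(1 - ρ ^ 2) * p.2)) (gam.prod gam) :=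
        i4.sub (hi _ _)
      simp only
      rw [e, integral_sub i5 (hi _ _), integral_sub i4 (hi _ _), integral_add (hi _ _) (hi _ _),
        ← rfun_cov q i i ρ hρ, ← rfun_cov q j j ρ hρ, ← rfun_cov q i j ρ hρ,
        ← rfun_cov q j i ρ hρ, rfun_symm q j i]
      ring

lemma fkfun_contWithin (q : ℕ → ℝ) (K : ℕ) (k : Fin K) :
    ContinuousWithinAt (fkfun q K k) (Set.Icc (-1) 1) 1 := by
  have h : ∀ i j, ContinuousWithinAt (rfun q i j) (Set.Icc (-1) 1) 1 := fun i j => by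
    have h1 : (1 : ℝ) ∈ Set.Icc (-1 : ℝ) 1 := by constructor <;> norm_num
    refine ContinuousWithinAt.congr (((G2_cont (q i) (q j) 1 h1).sub
      continuousAt_const).continuousWithinAt) (fun ρ hρ => rfun_eq q i j ρ hρ) (rfun_eq q i j 1 h1)
  unfold fkfun
  split_ifs
  · exact h _ _
  · exact h _ _
  · exact ((h _ _).add (h _ _)).sub (continuousWithinAt_const.mul (h _ _))

lemma fkfun_deriv (q : ℕ → ℝ) (K : ℕ) (k : Fin K) : ∃ g : ℝ → ℝ, DifferentiableAt ℝ g 0 ∧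
    ∀ x ∈ Set.Ioo (-1 : ℝ) 1, HasDerivAt (fkfun q K k) (g x) x := by
  unfold fkfun
  split_ifs
  · exact ⟨_, dens_diff _ _, fun x hx => rfun_hasDerivAt _ _ _ x hx⟩
  · exact ⟨_, dens_diff _ _, fun x hx => rfun_hasDerivAt _ _ _ x hx⟩
  · exact ⟨_, ((dens_diff _ _).add (dens_diff _ _)).sub ((dens_diff _ _).const_mul 2),
      fun x hx => ((rfun_hasDerivAt _ _ _ x hx).add (rfun_hasDerivAt _ _ _ x hx)).sub
        ((rfun_hasDerivAt _ _ _ x hx).const_mul 2)⟩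

lemma rfun_zero (q : ℕ → ℝ) (i j : ℕ) : rfun q i j 0 = 0 := by simp [rfun]

lemma fkfun_zero (q : ℕ → ℝ) (K : ℕ) (k : Fin K) : fkfun q K k 0 = 0 := by
  unfold fkfun; split_ifs <;> simp [rfun_zero]

lemma fkfun_one (q : ℕ → ℝ) (K : ℕ) (hK : 2 ≤ K) (k : Fin K)
    (hq : ∀ m : ℕ, 0 < m → m < K → stdGaussianCDF (q m) = (m : ℝ) / K) :
    fkfun q K k 1 = ((K : ℝ) - 1) / K ^ 2 := by
  have hK0 : (0 : ℝ) < K := by positivity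
  have h1 : (1 : ℝ) ∈ Set.Icc (-1 : ℝ) 1 := by constructor <;> norm_num
  have hk := k.isLt
  unfold fkfun
  simp only [rfun_eq q _ _ 1 h1, G2_one]
  split_ifs with h1 h2
  · rw [hq 1 one_pos (by omega), min_self]; push_cast; field_simp
  · rw [hq (K - 1) (by omega) (by omega), min_self, Nat.cast_sub (by omega)]
    push_cast; field_simp; ring
  · rw [hq k.val (by omega) hk, hq (k.val + 1) (by omega) (by omega), min_self, min_self,
      min_eq_left]
    · push_cast; field_simp; ring
    · push_cast; gcongr; linarith

lemma fresc_one (q : ℕ → ℝ) (K : ℕ) (hK : 2 ≤ K) (k : Fin K)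
    (hq : ∀ m : ℕ, 0 < m → m < K → stdGaussianCDF (q m) = (m : ℝ) / K) :
    fresc q K k 1 = 1 := by
  have h2 : (2 : ℝ) ≤ K := by exact_mod_cast hK
  have : (K : ℝ) - 1 ≠ 0 := by linarith
  unfold fresc
  rw [fkfun_one q K hK k hq]; field_simp

lemma taylor_aux (f g : ℝ → ℝ) (h0 : f 0 = 0) (hg : DifferentiableAt ℝ g 0)
    (hf : ∀ x ∈ Set.Ioo (-1 : ℝ) 1, HasDerivAt f (g x) x) :
    ∃ C ≥ 0, ∃ δ > 0, ∀ x, |x| ≤ δ → |f x - deriv f 0 * x| ≤ C * x ^ 2 := by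
  have hd : deriv f 0 = g 0 := (hf 0 (by constructor <;> norm_num)).deriv
  obtain ⟨C, hC⟩ := (hg.isBigO_sub).bound
  obtain ⟨δ', hδ', hb⟩ := Metric.eventually_nhds_iff.1 hC
  set δ := min (δ' / 2) (1 / 2) with hδ
  have hδ0 : 0 < δ := by positivity
  have hδ1 : δ < δ' := (min_le_left _ _).trans_lt (by linarith)
  have hδ2 : δ < 1 := (min_le_right _ _).trans_lt (by norm_num)
  refine ⟨|C|, abs_nonneg _, δ, hδ0, fun x hx => ?_⟩
  have key := Convex.norm_image_sub_le_of_norm_hasDerivWithin_le (𝕜 := ℝ)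
    (f := fun y => f y - g 0 * y) (f' := fun y => g y - g 0) (s := Set.Icc (-|x|) |x|)
    (C := |C| * |x|) (x := 0) (y := x)
    (fun y hy => by
      have hy' := abs_le.2 hy
      have := (hf y (abs_lt.1 ((hy'.trans hx).trans_lt hδ2))).sub ((hasDerivAt_id y).const_mul (g 0))
      simpa using! this.hasDerivWithinAt)
    (fun y hy => by
      have hy' := abs_le.2 hy
      have h1 := hb (y := y) (by rw [Real.dist_eq, sub_zero]; exact (hy'.trans hx).trans_lt hδ1)
      rw [sub_zero, Real.norm_eq_abs y] at h1
      refine h1.trans ?_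
      exact (mul_le_mul_of_nonneg_right (le_abs_self C) (abs_nonneg y)).trans
        (mul_le_mul_of_nonneg_left hy' (abs_nonneg C)))
    (convex_Icc _ _) (by simp) (abs_le.1 le_rfl)
  simp only [h0, mul_zero, sub_zero, Real.norm_eq_abs] at key
  rw [hd, ← sq_abs x]
  linarith

lemma fresc_taylor (q : ℕ → ℝ) (K : ℕ) (k : Fin K) :
    ∃ C ≥ 0, ∃ δ > 0, ∀ x, |x| ≤ δ →
      |fresc q K k x - deriv (fresc q K k) 0 * x| ≤ C * x ^ 2 := by
  obtain ⟨g, hg, hf⟩ := fkfun_deriv q K k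
  refine taylor_aux (fresc q K k) (fun x => (K : ℝ) ^ 2 / ((K : ℝ) - 1) * g x) ?_
    (hg.const_mul _) fun x hx => (hf x hx).const_mul _
  simp [fresc, fkfun_zero]

lemma fresc_near_one (q : ℕ → ℝ) (K : ℕ) (hK : 2 ≤ K) (k : Fin K)
    (hq : ∀ m : ℕ, 0 < m → m < K → stdGaussianCDF (q m) = (m : ℝ) / K) (c ε : ℝ) (hε : 0 < ε) :
    ∃ η > 0, ∀ x ≤ 1, |x - 1| ≤ η → |fresc q K k x - 1 - c * (x - 1)| ≤ ε := by
  have h1 : ContinuousWithinAt (fun x => fresc q K k x - 1 - c * (x - 1)) (Set.Icc (-1) 1) 1 := by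
    refine ((continuousWithinAt_const.mul (fkfun_contWithin q K k)).sub
      continuousWithinAt_const).sub ?_
    exact (by fun_prop : Continuous fun x : ℝ => c * (x - 1)).continuousWithinAt
  obtain ⟨δ, hδ, h⟩ := Metric.continuousWithinAt_iff.1 h1 ε hε
  refine ⟨min (δ / 2) 1, by positivity, fun x hx hx2 => ?_⟩
  have hx3 : |x - 1| ≤ 1 := hx2.trans (min_le_right _ _)
  have hx4 : |x - 1| < δ := (hx2.trans (min_le_left _ _)).trans_lt (by linarith)
  have := h (x := x) ⟨by linarith [(abs_le.1 hx3).1], hx⟩ (by rwa [Real.dist_eq])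
  rw [Real.dist_eq, fresc_one q K hK k hq] at this
  simp only [sub_self, mul_zero, sub_zero] at this
  exact this.le

open scoped MatrixOrder in
lemma exists_factor {n : ℕ} (S : Matrix (Fin n) (Fin n) ℝ) (hS : S.PosSemidef) :
    ∃ A : Matrix (Fin n) (Fin n) ℝ, S = Aᴴ * A := by
  obtain ⟨B, hB⟩ := CStarAlgebra.nonneg_iff_eq_star_mul_self.mp hS.nonneg
  exact ⟨B, hB⟩

lemma fresc_psd (q : ℕ → ℝ) (K : ℕ) (hK : 2 ≤ K) (k : Fin K) {n : ℕ}
    (S : Matrix (Fin n) (Fin n) ℝ) (hS : S.PosSemidef) (hd : ∀ i, S i i = 1) :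
    (entrywise (fresc q K k) S).PosSemidef := by
  obtain ⟨h, B, hm, hB, hr⟩ := fkfun_repr q K k
  have hsym : S.IsSymm := by simpa [Matrix.IsHermitian, Matrix.IsSymm] using hS.isHermitian
  obtain ⟨A, hA⟩ := exists_factor S hS
  set p : Fin n → EuclideanSpace ℝ (Fin n) := fun i => WithLp.toLp 2 (fun l => A l i) with hp
  have hin : ∀ i j, inner ℝ (p i) (p j) = S i j := fun i j => by
    rw [hA]
    simp [hp, PiLp.inner_apply, Matrix.mul_apply, mul_comm]
  have hnorm : ∀ i, ‖p i‖ = 1 := fun i => by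
    have : ‖p i‖ ^ 2 = 1 := by rw [← real_inner_self_eq_norm_sq, hin, hd]
    nlinarith [norm_nonneg (p i)]
  set μ := stdGaussian (EuclideanSpace ℝ (Fin n)) with hμ
  have hcov : ∀ i j, fkfun q K k (S i j) =
      ∫ g, h (inner ℝ (p i) g) * h (inner ℝ (p j) g) ∂μ := fun i j => by
    have hρ : S i j ∈ Set.Icc (-1 : ℝ) 1 := by
      rw [Set.mem_Icc, ← abs_le, ← hin]
      simpa [hnorm] using abs_real_inner_le_norm (p i) (p j)
    have hm2 : Measurable (fun y : ℝ × ℝ => h y.1 * h y.2) :=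
      (hm.comp measurable_fst).mul (hm.comp measurable_snd)
    have law := law_pair (p i) (p j) (hnorm i) (hnorm j)
    rw [hr _ hρ]
    have e1 := integral_map (μ := gam.prod gam) (φ := pairCLM (S i j)) (by fun_prop)
      hm2.aestronglyMeasurable
    have e2 := integral_map (μ := μ) (φ := fun g => (inner ℝ (p i) g, inner ℝ (p j) g))
      (by fun_prop) hm2.aestronglyMeasurable
    rw [hin] at law
    rw [law, e1] at e2
    simpa only [pairCLM_apply] using e2
  have hint : ∀ i j, Integrable (fun g => h (inner ℝ (p i) g) * h (inner ℝ (p j) g)) μ :=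
    fun i j => by
    refine Integrable.of_bound ((hm.comp (by fun_prop)).mul
      (hm.comp (by fun_prop))).aestronglyMeasurable (B * B) (Eventually.of_forall fun g => ?_)
    rw [norm_mul]
    exact mul_le_mul (hB _) (hB _) (norm_nonneg _) ((abs_nonneg _).trans (hB 0))
  have h2 : (2 : ℝ) ≤ K := by exact_mod_cast hK
  have hc : 0 ≤ (K : ℝ) ^ 2 / ((K : ℝ) - 1) := div_nonneg (by positivity) (by linarith)
  refine Matrix.PosSemidef.of_dotProduct_mulVec_nonneg ?_ fun v => ?_
  · ext i j
    simp [entrywise, hsym.apply i j]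
  · have e : star v ⬝ᵥ (entrywise (fresc q K k) S *ᵥ v) = (K : ℝ) ^ 2 / ((K : ℝ) - 1) *
        ∫ g, (∑ i, v i * h (inner ℝ (p i) g)) ^ 2 ∂μ := by
      have e1 : ∀ g, (∑ i, v i * h (inner ℝ (p i) g)) ^ 2 =
          ∑ i, ∑ j, v i * v j * (h (inner ℝ (p i) g) * h (inner ℝ (p j) g)) := fun g => by
        rw [sq, Finset.sum_mul_sum]
        exact Finset.sum_congr rfl fun i _ => Finset.sum_congr rfl fun j _ => by ring
      simp_rw [e1]
      rw [integral_finsetSum _ fun i _ => integrable_finsetSum _ fun j _ => (hint i j).const_mul _]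
      simp_rw [integral_finsetSum _ fun j _ => (hint _ j).const_mul _, integral_const_mul, ← hcov]
      simp only [dotProduct, Matrix.mulVec, entrywise, Matrix.of_apply, fresc, Finset.mul_sum,
        star_trivial]
      exact Finset.sum_congr rfl fun i _ => Finset.sum_congr rfl fun j _ => by ring
    rw [e]
    exact mul_nonneg hc (integral_nonneg fun g => sq_nonneg _)

/-- **Entrywise matrix Taylor expansions of the Gaussianized covariance map.**
With `f = (K²/(K−1)) f_k` (so `f(0) = 0`, `f(1) = 1`) and `Σ⁽ⁿ⁾` in the correlation elliptope
with `Δ_n = Σ⁽ⁿ⁾ − I` and `‖Δ_n‖_op → 0`: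
(i) `f(Σ⁽ⁿ⁾) = I + f′(0)Δ_n + O(‖Δ_n‖_op²)` in operator norm, and `‖f(Σ⁽ⁿ⁾)‖_op = O(1)`;
(ii) `f(Σ⁽ⁿ⁾)` is positive semidefinite, and its positive semidefinite square root `Q_n`
(the unique PSD `Q` with `Q² = f(Σ⁽ⁿ⁾)`) satisfies
`Q_n = I + (1/2)f′(0)Δ_n + O(‖Δ_n‖_op²)`;
(iii) the entries of the PSD square root `P_n` of `Σ⁽ⁿ⁾` lie in `[−1,1]` and
`f(P_n) = I + (1/2)f′(0)Δ_n + R₃ₙ` with `‖R₃ₙ‖_op = o(1) + O(‖Δ_n‖_op²)`. -/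
theorem entrywise_taylor_expansions
    (K : ℕ) (hK : 2 ≤ K) (k : Fin K)
    (q : ℕ → ℝ) (hq : ∀ m : ℕ, 0 < m → m < K → stdGaussianCDF (q m) = (m : ℝ) / K)
    (S : ∀ nn : ℕ, Matrix (Fin nn) (Fin nn) ℝ)
    (hSpsd : ∀ nn, (S nn).PosSemidef) (hSdiag : ∀ nn (i : Fin nn), S nn i i = 1)
    (hSop : Tendsto (fun nn => opNorm (S nn - 1)) atTop (𝓝 0)) :
    ((∃ C : ℝ, ∀ᶠ nn in atTop,
        opNorm (entrywise (fresc q K k) (S nn) - 1 -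
          deriv (fresc q K k) 0 • (S nn - 1)) ≤ C * opNorm (S nn - 1) ^ 2) ∧
      ∃ C : ℝ, ∀ᶠ nn in atTop, opNorm (entrywise (fresc q K k) (S nn)) ≤ C) ∧
    ((∀ nn, (entrywise (fresc q K k) (S nn)).PosSemidef) ∧
      ∀ Q : ∀ nn : ℕ, Matrix (Fin nn) (Fin nn) ℝ,
        (∀ nn, (Q nn).PosSemidef ∧ Q nn * Q nn = entrywise (fresc q K k) (S nn)) →
        ∃ C : ℝ, ∀ᶠ nn in atTop,
          opNorm (Q nn - 1 - (deriv (fresc q K k) 0 / 2) • (S nn - 1)) ≤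
            C * opNorm (S nn - 1) ^ 2) ∧
    ∀ P : ∀ nn : ℕ, Matrix (Fin nn) (Fin nn) ℝ,
      (∀ nn, (P nn).PosSemidef ∧ P nn * P nn = S nn) →
      (∀ nn (i j : Fin nn), P nn i j ∈ Set.Icc (-1 : ℝ) 1) ∧
      ∃ C : ℝ, ∀ ε > (0 : ℝ), ∀ᶠ nn in atTop,
        opNorm (entrywise (fresc q K k) (P nn) - 1 -
          (deriv (fresc q K k) 0 / 2) • (S nn - 1)) ≤ ε + C * opNorm (S nn - 1) ^ 2 := by
  obtain ⟨C, hC, δ, hδ, hT⟩ := fresc_taylor q K k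
  have f1 := fresc_one q K hK k hq
  set f := fresc q K k with hf
  set c := deriv f 0 with hc
  have hev : ∀ η > (0 : ℝ), ∀ᶠ nn in atTop, opNorm (S nn - 1) ≤ η := fun η hη =>
    (hSop.eventually (gt_mem_nhds hη)).mono fun _ h => le_of_lt h
  have h1 : ∀ᶠ nn in atTop,
      opNorm (entrywise f (S nn) - 1 - c • (S nn - 1)) ≤ C * opNorm (S nn - 1) ^ 2 := by
    filter_upwards [hev δ hδ] with nn h
    exact part_one f c C δ hC f1 hT (S nn) (hSpsd nn) (hSdiag nn) h
  refine ⟨⟨⟨C, h1⟩, C + |c| + 1, ?_⟩, ⟨fun nn => ?_, fun Q hQ => ?_⟩, fun P hP => ⟨?_, ?_⟩⟩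
  · filter_upwards [h1, hev 1 one_pos] with nn h h'
    have e : entrywise f (S nn) =
        (entrywise f (S nn) - 1 - c • (S nn - 1)) + (c • (S nn - 1) + 1) := by module
    rw [e]
    have a1 := opNorm_add_le (entrywise f (S nn) - 1 - c • (S nn - 1)) (c • (S nn - 1) + 1)
    have a2 := opNorm_add_le (c • (S nn - 1)) 1
    rw [opNorm_smul] at a2
    have a3 := opNorm_one_le (m := nn)
    have a4 : C * opNorm (S nn - 1) ^ 2 ≤ C * 1 :=
      mul_le_mul_of_nonneg_left (pow_le_one₀ (opNorm_nonneg _) h') hC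
    have a5 := mul_le_mul_of_nonneg_left h' (abs_nonneg c)
    linarith
  · exact fresc_psd q K hK k (S nn) (hSpsd nn) (hSdiag nn)
  · refine ⟨1 / 2 * C + 1 / 2 * (C + |c|) ^ 2, ?_⟩
    filter_upwards [h1, hev 1 one_pos] with nn h h'
    exact part_two c C (S nn) _ (Q nn) hC h h' (hQ nn).1 (hQ nn).2
  · exact fun nn i j => part_three_entries (S nn) (P nn) (hP nn).1 (hSdiag nn) (hP nn).2 i j
  · refine ⟨C + |c| / 2, fun ε hε => ?_⟩
    obtain ⟨η, hη, hη'⟩ := fresc_near_one q K hK k hq c ε hε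
    filter_upwards [hev δ hδ, hev η hη] with nn h h'
    exact part_three f c C δ ε η hC hε.le hT hη' (S nn) (P nn) (hSdiag nn) (hP nn).1 (hP nn).2 h h'

end
end

section
/- (Aronow–Samii-type variance bound.) For any uniform design with K treatment arms and any weight vector w ∈ ℝᴷ, with τ̂_w = Σ_k w_k τ̂_k, one has n·Var(τ̂_w) ≤ VB, where VB = (K²/n) Σ_{k=1}^{K} w_k² Σ_{i=1}^{n} Y_i(k)² Var(1{D_i = k}) + (K²/n) Σ_{k,l=1}^{K} w_k w_l Σ_{i ≠ j} Y_i(k) Y_j(l) Cov(1{D_i = k}, 1{D_j = l}) + (1/(2n)) Σ_{k ≠ l} |w_k||w_l| Σ_{i=1}^{n} (Y_i(k)² + Y_i(l)²). -/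
open MeasureTheory ProbabilityTheory Matrix
open scoped BigOperators ENNReal NNReal

noncomputable section

/-- Covariance of two real random variables on a measure space. -/
def cov {Ω : Type*} [MeasureSpace Ω] (U V : Ω → ℝ) : ℝ :=
  (∫ ω, U ω * V ω) - (∫ ω, U ω) * (∫ ω, V ω)

/-- Variance of a real random variable on a measure space. -/
def var {Ω : Type*} [MeasureSpace Ω] (U : Ω → ℝ) : ℝ :=
  ∫ ω, (U ω - ∫ ω', U ω') ^ 2

theorem aux_var_eq {Ω : Type*} [MeasureSpace Ω] (U : Ω → ℝ) :
    var U = ProbabilityTheory.covariance U U volume := by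
  simp only [var, ProbabilityTheory.covariance, sq]

theorem aux_cov_eq {Ω : Type*} [MeasureSpace Ω] [IsProbabilityMeasure (volume : Measure Ω)]
    (U V : Ω → ℝ) (hU : MemLp U 2 volume) (hV : MemLp V 2 volume) :
    cov U V = ProbabilityTheory.covariance U V volume := by
  rw [covariance_eq_sub hU hV]; rfl

/-- **Aronow–Samii-type variance bound.** For any uniform design with `K`
treatment arms and any weight vector `w`, `n · Var(τ̂_w) ≤ VB` with
`VB = (K²/n) Σ_k w_k² Σ_i Y_i(k)² Var(1{D_i=k})
 + (K²/n) Σ_{k,l} w_k w_l Σ_{i≠j} Y_i(k) Y_j(l) Cov(1{D_i=k}, 1{D_j=l})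
 + (1/(2n)) Σ_{k≠l} |w_k||w_l| Σ_i (Y_i(k)² + Y_i(l)²)`. -/
theorem aronow_samii_variance_bound
    {Ω : Type*} [MeasureSpace Ω] [IsProbabilityMeasure (volume : Measure Ω)]
    (n K : ℕ) (hn : 0 < n) (hK : 2 ≤ K)
    (D : Ω → Fin n → Fin K) (hD : Measurable D)
    (hunif : ∀ (i : Fin n) (k : Fin K), volume {ω | D ω i = k} = (K : ℝ≥0∞)⁻¹)
    (Y : Fin K → Fin n → ℝ) (w : Fin K → ℝ) :
    (n : ℝ) * var (fun ω =>
        ∑ k, w k * ((K : ℝ) / n * ∑ i, (if D ω i = k then Y k i else 0))) ≤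
      (K : ℝ) ^ 2 / n * ∑ k, (w k) ^ 2 * ∑ i, (Y k i) ^ 2 *
          var (fun ω => if D ω i = k then (1 : ℝ) else 0) +
        (K : ℝ) ^ 2 / n * ∑ k, ∑ l, w k * w l * ∑ i, ∑ j,
          (if i = j then 0 else Y k i * Y l j *
            cov (fun ω => if D ω i = k then (1 : ℝ) else 0)
                (fun ω => if D ω j = l then (1 : ℝ) else 0)) +
        1 / (2 * (n : ℝ)) * ∑ k, ∑ l,
          (if k = l then 0 else |w k| * |w l| * ∑ i, ((Y k i) ^ 2 + (Y l i) ^ 2)) := by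
  classical
  have hn' : (0 : ℝ) < n := by exact_mod_cast hn
  have hK' : (0 : ℝ) < K := by exact_mod_cast (by omega : 0 < K)
  set X : Fin K → Fin n → Ω → ℝ := fun k i ω => if D ω i = k then (1 : ℝ) else 0 with hX
  have hset : ∀ i k, MeasurableSet {ω | D ω i = k} := fun i k =>
    ((measurable_pi_apply i).comp hD) (measurableSet_singleton k)
  have hXL : ∀ k i, MemLp (X k i) 2 volume := by
    intro k i
    refine MemLp.of_bound (C := 1)
      (Measurable.ite (hset i k) measurable_const measurable_const).aestronglyMeasurable ?_
    refine Filter.Eventually.of_forall fun ω => ?_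
    simp only [hX]
    split_ifs <;> simp
  have hEX : ∀ k i, ∫ ω, X k i ω = (K : ℝ)⁻¹ := by
    intro k i
    have h1 : X k i = Set.indicator {ω | D ω i = k} (fun _ => (1 : ℝ)) := by
      ext ω
      simp [hX, Set.indicator_apply]
    rw [h1, integral_indicator_const _ (hset i k), measureReal_def, hunif i k]
    simp
  have hC0 : ∀ k l i, k ≠ l → cov (X k i) (X l i) = - ((K : ℝ) ^ 2)⁻¹ := by
    intro k l i hkl
    have h1 : ∀ ω, X k i ω * X l i ω = 0 := by
      intro ω
      simp only [hX]
      by_cases h : D ω i = k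
      · have : D ω i ≠ l := fun h' => hkl (h.symm.trans h')
        simp [this]
      · simp [h]
    simp only [cov, h1, hEX]
    simp only [integral_zero]
    ring
  have hvar : ∀ k i, var (X k i) = cov (X k i) (X k i) := by
    intro k i
    rw [aux_var_eq, aux_cov_eq _ _ (hXL k i) (hXL k i)]
  have hrw : (fun ω => ∑ k, w k * ((K : ℝ) / n * ∑ i, (if D ω i = k then Y k i else 0)))
      = fun ω => ∑ k, (w k * ((K : ℝ) / n)) * ∑ i, Y k i * X k i ω := by
    ext ω
    simp only [hX, mul_ite, mul_one, mul_zero, mul_assoc]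
  have hL1 : ∀ k, MemLp (fun ω => ∑ i, Y k i * X k i ω) 2 volume := fun k =>
    memLp_finsetSum _ fun i _ => (hXL k i).const_mul (Y k i)
  have hmain : var (fun ω => ∑ k, w k * ((K : ℝ) / n * ∑ i, (if D ω i = k then Y k i else 0)))
      = ∑ k, ∑ l, (w k * ((K : ℝ) / n)) * ((w l * ((K : ℝ) / n)) *
          ∑ i, ∑ j, Y k i * (Y l j * cov (X k i) (X l j))) := by
    rw [hrw, aux_var_eq, covariance_fun_sum_fun_sum (fun k => (hL1 k).const_mul _)
      (fun k => (hL1 k).const_mul _)]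
    refine Finset.sum_congr rfl fun k _ => Finset.sum_congr rfl fun l _ => ?_
    rw [covariance_const_mul_left, covariance_const_mul_right,
      covariance_fun_sum_fun_sum (fun i => (hXL k i).const_mul _)
        (fun i => (hXL l i).const_mul _)]
    congr 2
    refine Finset.sum_congr rfl fun i _ => Finset.sum_congr rfl fun j _ => ?_
    rw [covariance_const_mul_left, covariance_const_mul_right,
      aux_cov_eq _ _ (hXL k i) (hXL l j)]
  have hsplit : ∀ f : Fin n → Fin n → ℝ, ∑ i, ∑ j, f i j
      = ∑ i, f i i + ∑ i, ∑ j, (if i = j then 0 else f i j) := by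
    intro f
    rw [← Finset.sum_add_distrib]
    refine Finset.sum_congr rfl fun i _ => ?_
    have : f i i = ∑ j, if i = j then f i j else 0 := by simp
    rw [this, ← Finset.sum_add_distrib]
    refine Finset.sum_congr rfl fun j _ => ?_
    split_ifs <;> simp
  have hdiag : ∑ k, (w k) ^ 2 * ∑ i, (Y k i) ^ 2 * var (X k i)
      = ∑ k, ∑ l, if k = l then (w k) ^ 2 * ∑ i, (Y k i) ^ 2 * var (X k i) else 0 := by
    simp
  rw [hmain]
  change _ ≤ (K : ℝ) ^ 2 / n * ∑ k, (w k) ^ 2 * ∑ i, (Y k i) ^ 2 * var (X k i) +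
        (K : ℝ) ^ 2 / n * ∑ k, ∑ l, w k * w l * ∑ i, ∑ j,
          (if i = j then 0 else Y k i * Y l j * cov (X k i) (X l j)) + _
  rw [hdiag]
  simp only [Finset.mul_sum (s := (Finset.univ : Finset (Fin K))), ← Finset.sum_add_distrib]
  refine Finset.sum_le_sum fun k _ => Finset.sum_le_sum fun l _ => ?_
  rw [hsplit]
  simp only [← mul_assoc (Y _ _) (Y _ _) (cov _ _)]
  generalize ∑ i, ∑ j, (if i = j then 0 else Y k i * Y l j * cov (X k i) (X l j)) = S
  by_cases hkl : k = l
  · subst hkl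
    simp only [if_true, hvar, ← sq]
    apply le_of_eq
    field_simp
    ring
  · simp only [if_neg hkl]
    have h2 : ∑ i, Y k i * Y l i * cov (X k i) (X l i)
        = - ((K : ℝ) ^ 2)⁻¹ * ∑ i, Y k i * Y l i := by
      rw [Finset.mul_sum]
      refine Finset.sum_congr rfl fun i _ => ?_
      rw [hC0 k l i hkl]; ring
    rw [h2]
    have h3 : - (w k * w l * ∑ i, Y k i * Y l i)
        ≤ 1 / 2 * (|w k| * |w l| * ∑ i, ((Y k i) ^ 2 + (Y l i) ^ 2)) := by
      rw [Finset.mul_sum, Finset.mul_sum, Finset.mul_sum, ← Finset.sum_neg_distrib]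
      refine Finset.sum_le_sum fun i _ => ?_
      have h4 : -(w k * w l * (Y k i * Y l i)) ≤ |w k| * |w l| * (|Y k i| * |Y l i|) := by
        rw [← abs_mul, ← abs_mul, ← abs_mul]
        exact neg_le_abs _
      have h5 : |Y k i| * |Y l i| ≤ 1 / 2 * ((Y k i) ^ 2 + (Y l i) ^ 2) := by
        nlinarith [sq_nonneg (|Y k i| - |Y l i|), sq_abs (Y k i), sq_abs (Y l i)]
      have h6 := mul_le_mul_of_nonneg_left h5 (by positivity : 0 ≤ |w k| * |w l|)
      linarith
    have h7 := mul_le_mul_of_nonneg_left h3 (inv_nonneg.2 hn'.le)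
    generalize ∑ i, Y k i * Y l i = P at *
    generalize ∑ i, ((Y k i) ^ 2 + (Y l i) ^ 2) = Q at *
    have e1 : (n : ℝ) * (w k * ((K : ℝ) / n) * (w l * ((K : ℝ) / n) *
        (-((K : ℝ) ^ 2)⁻¹ * P + S))) = (n : ℝ)⁻¹ * -(w k * w l * P)
          + (K : ℝ) ^ 2 / n * (w k * w l * S) := by
      field_simp
    have e2 : 1 / (2 * (n : ℝ)) * (|w k| * |w l| * Q)
        = (n : ℝ)⁻¹ * (1 / 2 * (|w k| * |w l| * Q)) := by
      field_simp
    rw [e1, e2]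
    linarith

end
end
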